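/- Let p₀ < p₁ < 0 and γ₁, γ₂ ∈ ℝ, and define Γ : [p₀,0] → ℝ by Γ(p) := γ₂ p for p ∈ [p₁,0] and Γ(p) := γ₂ p₁ + γ₁(p − p₁) for p ∈ [p₀,p₁]. For λ > 2 max_{[p₀,0]} Γ define H(p) := ∫_{p₀}^p (λ − 2Γ(s))^{−1/2} ds for p ∈ [p₀,0]. Then H is continuously differentiable on [p₀,0] with H(p₀) = 0, H is twice differentiable on (p₀,p₁) with H″ = γ₁ (H′)³ there, H is twice differentiable on (p₁,0) with H″ = γ₂ (H′)³ there, and for Q ∈ ℝ the equation 1 + (2g·H(0) − Q)·H′(0)² = 0 holds if and only if Q = λ + 2g·∫_{p₀}^0 (λ − 2Γ(p))^{−1/2} dp. -/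

import Mathlib

open Set

/-!
The profile `H` is a primitive of `H′ = (λ − 2Γ)^{-1/2}`. Differentiating this relation gives
`H″ = Γ′ (H′)³`, and `Γ′` equals `γ₁` or `γ₂` inside the two layers. At the surface `Γ 0 = 0`, so
`H′(0)² = 1/λ` and the Bernoulli condition becomes a linear equation for `Q`.
-/

lemma hasDerivWithinAt_integral_Icc {E : Type*} [NormedAddCommGroup E] [NormedSpace ℝ E]
    [CompleteSpace E] {f : ℝ → E} {a b c x : ℝ} (hf : ContinuousOn f (Icc a b))
    (hc : c ∈ Icc a b) (hx : x ∈ Icc a b) :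
    HasDerivWithinAt (fun t => ∫ s in c..t, f s) (f x) (Icc a b) x := by
  have : Fact (x ∈ Icc a b) := ⟨hx⟩
  exact intervalIntegral.integral_hasDerivWithinAt_right
    (hf.mono (uIcc_subset_Icc hc hx)).intervalIntegrable
    (hf.stronglyMeasurableAtFilter_nhdsWithin measurableSet_Icc x) (hf x hx)

lemma hasDerivAt_inv_sqrt {f : ℝ → ℝ} {f' x : ℝ} (hf : HasDerivAt f f' x) (hx : 0 < f x) :
    HasDerivAt (fun t => (√(f t))⁻¹) (-(f' / 2) * (√(f x))⁻¹ ^ 3) x := by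
  have hsqrt : √(f x) ≠ 0 := (Real.sqrt_pos.2 hx).ne'
  refine ((hf.sqrt hx.ne').fun_inv hsqrt).congr_deriv ?_
  field_simp

lemma hasDerivAt_of_eqOn_affine {𝕜 : Type*} [NontriviallyNormedField 𝕜] {f : 𝕜 → 𝕜}
    {s : Set 𝕜} {m c x : 𝕜} (hf : EqOn f (fun t => m * t + c) s) (hs : s ∈ nhds x) :
    HasDerivAt f m x := by
  have haffine : HasDerivAt (fun t => m * t + c) m x := by
    simpa only [mul_one] using ((hasDerivAt_id' x).const_mul m).add_const c
  exact haffine.congr_of_eventuallyEq (hf.eventuallyEq_of_mem hs)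

lemma continuousOn_Icc_trans {α β : Type*} [LinearOrder α] [TopologicalSpace α]
    [OrderClosedTopology α] [TopologicalSpace β] {f : α → β} {a b c : α} (hab : a ≤ b)
    (hbc : b ≤ c) (h₁ : ContinuousOn f (Icc a b)) (h₂ : ContinuousOn f (Icc b c)) :
    ContinuousOn f (Icc a c) := by
  rw [← Icc_union_Icc_eq_Icc hab hbc]
  exact h₁.union_of_isClosed h₂ isClosed_Icc isClosed_Icc

/-- The slope `H′ = (λ − 2Γ)^{-1/2}` of the laminar height function with parameter `λ = lam` and
vorticity primitive `Γ`. -/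
noncomputable def laminarSlope (lam : ℝ) (Γ : ℝ → ℝ) (p : ℝ) : ℝ :=
  (√(lam - 2 * Γ p))⁻¹

/-- The height `H(p)` of the streamline labelled `p` above the bed `p = p₀` in the laminar flow
with parameter `λ = lam` and vorticity primitive `Γ`. -/
noncomputable def laminarHeight (lam : ℝ) (Γ : ℝ → ℝ) (p₀ p : ℝ) : ℝ :=
  ∫ s in p₀..p, laminarSlope lam Γ s

section Laminar

variable {lam : ℝ} {Γ : ℝ → ℝ} {p : ℝ}

lemma laminarSlope_sq (hp : 2 * Γ p < lam) :
    laminarSlope lam Γ p ^ 2 = (lam - 2 * Γ p)⁻¹ := by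
  rw [laminarSlope, inv_pow, Real.sq_sqrt (sub_pos.2 hp).le]

lemma continuousOn_laminarSlope {s : Set ℝ} (hΓ : ContinuousOn Γ s)
    (hlt : ∀ p ∈ s, 2 * Γ p < lam) : ContinuousOn (laminarSlope lam Γ) s :=
  (continuousOn_const.sub (continuousOn_const.mul hΓ)).sqrt.inv₀ fun p hp =>
    (Real.sqrt_pos.2 (sub_pos.2 (hlt p hp))).ne'

lemma hasDerivAt_laminarSlope {γ : ℝ} (hΓ : HasDerivAt Γ γ p) (hp : 2 * Γ p < lam) :
    HasDerivAt (laminarSlope lam Γ) (γ * laminarSlope lam Γ p ^ 3) p := by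
  refine (hasDerivAt_inv_sqrt ((hΓ.const_mul 2).const_sub lam) (sub_pos.2 hp)).congr_deriv ?_
  rw [laminarSlope]
  ring

lemma hasDerivWithinAt_laminarHeight {a b p₀ : ℝ}
    (hΓ : ContinuousOn Γ (Icc a b)) (hlt : ∀ p ∈ Icc a b, 2 * Γ p < lam)
    (hp₀ : p₀ ∈ Icc a b) (hp : p ∈ Icc a b) :
    HasDerivWithinAt (laminarHeight lam Γ p₀) (laminarSlope lam Γ p) (Icc a b) p :=
  hasDerivWithinAt_integral_Icc (continuousOn_laminarSlope hΓ hlt) hp₀ hp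

lemma one_add_sub_mul_laminarSlope_sq_eq_zero_iff (hp : 2 * Γ p < lam) (a Q : ℝ) :
    1 + (a - Q) * laminarSlope lam Γ p ^ 2 = 0 ↔ Q = lam - 2 * Γ p + a := by
  have hne : lam - 2 * Γ p ≠ 0 := (sub_pos.2 hp).ne'
  rw [laminarSlope_sq hp, ← div_eq_mul_inv, one_add_div hne, div_eq_zero_iff, or_iff_left hne,
    ← add_sub_assoc, sub_eq_zero, eq_comm]

end Laminar

/-- For the two-layer piecewise linear `Γ` and `λ > 2 max Γ`, the function
`H(p) := ∫_{p₀}^p (λ − 2Γ(s))^{−1/2} ds` is `C¹` on `[p₀,0]` with `H(p₀) = 0`, satisfies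
`H″ = γ₁ (H′)³` on `(p₀,p₁)` and `H″ = γ₂ (H′)³` on `(p₁,0)`, and for `Q ∈ ℝ` one has
`1 + (2g·H(0) − Q)·H′(0)² = 0` iff `Q = λ + 2g·∫_{p₀}^0 (λ − 2Γ(p))^{−1/2} dp`. -/
theorem stmt_1 (g p₀ p₁ γ₁ γ₂ lam : ℝ) (hg : 0 < g) (h01 : p₀ < p₁) (h10 : p₁ < 0)
    (Γ : ℝ → ℝ)
    (hΓ₂ : ∀ p ∈ Set.Icc p₁ (0 : ℝ), Γ p = γ₂ * p)
    (hΓ₁ : ∀ p ∈ Set.Icc p₀ p₁, Γ p = γ₂ * p₁ + γ₁ * (p - p₁))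
    (hlam : 2 * sSup (Γ '' Set.Icc p₀ 0) < lam) :
    (∫ s in p₀..p₀, (Real.sqrt (lam - 2 * Γ s))⁻¹) = 0 ∧
    (∀ p ∈ Set.Icc p₀ (0 : ℝ),
      HasDerivWithinAt (fun t => ∫ s in p₀..t, (Real.sqrt (lam - 2 * Γ s))⁻¹)
        ((Real.sqrt (lam - 2 * Γ p))⁻¹) (Set.Icc p₀ 0) p) ∧
    ContinuousOn (fun p => (Real.sqrt (lam - 2 * Γ p))⁻¹) (Set.Icc p₀ 0) ∧
    (∀ p ∈ Set.Ioo p₀ p₁,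
      HasDerivAt (fun t => (Real.sqrt (lam - 2 * Γ t))⁻¹)
        (γ₁ * ((Real.sqrt (lam - 2 * Γ p))⁻¹) ^ 3) p) ∧
    (∀ p ∈ Set.Ioo p₁ (0 : ℝ),
      HasDerivAt (fun t => (Real.sqrt (lam - 2 * Γ t))⁻¹)
        (γ₂ * ((Real.sqrt (lam - 2 * Γ p))⁻¹) ^ 3) p) ∧
    (∀ Q : ℝ,
      1 + (2 * g * (∫ s in p₀..0, (Real.sqrt (lam - 2 * Γ s))⁻¹) - Q)
          * ((Real.sqrt (lam - 2 * Γ 0))⁻¹) ^ 2 = 0 ↔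
        Q = lam + 2 * g * ∫ s in p₀..0, (Real.sqrt (lam - 2 * Γ s))⁻¹) := by
  have hlower : EqOn Γ (fun p => γ₁ * p + (γ₂ - γ₁) * p₁) (Icc p₀ p₁) := fun p hp => by
    rw [hΓ₁ p hp]; ring
  have hupper : EqOn Γ (fun p => γ₂ * p + 0) (Icc p₁ 0) := fun p hp =>
    (hΓ₂ p hp).trans (add_zero _).symm
  have hcont : ContinuousOn Γ (Icc p₀ 0) :=
    continuousOn_Icc_trans h01.le h10.le (.congr (by fun_prop) hlower) (.congr (by fun_prop) hupper)
  have hlt : ∀ p ∈ Icc p₀ 0, 2 * Γ p < lam := fun p hp =>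
    (lt_div_iff₀' two_pos).1 <| (isCompact_Icc.sSup_lt_iff_of_continuous ⟨p, hp⟩ hcont _).1
      ((lt_div_iff₀' two_pos).2 hlam) p hp
  have hbed : p₀ ∈ Icc p₀ 0 := left_mem_Icc.2 (h01.trans h10).le
  have hsurface : (0 : ℝ) ∈ Icc p₀ 0 := right_mem_Icc.2 (h01.trans h10).le
  have hΓ0 : Γ 0 = 0 := by rw [hΓ₂ 0 (right_mem_Icc.2 h10.le), mul_zero]
  refine ⟨intervalIntegral.integral_same,
    fun p hp => hasDerivWithinAt_laminarHeight hcont hlt hbed hp,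
    continuousOn_laminarSlope hcont hlt, fun p hp => ?_, fun p hp => ?_, fun Q => ?_⟩
  · exact hasDerivAt_laminarSlope (hasDerivAt_of_eqOn_affine hlower (Icc_mem_nhds hp.1 hp.2))
      (hlt p ⟨hp.1.le, (hp.2.trans h10).le⟩)
  · exact hasDerivAt_laminarSlope (hasDerivAt_of_eqOn_affine hupper (Icc_mem_nhds hp.1 hp.2))
      (hlt p ⟨(h01.trans hp.1).le, hp.2.le⟩)
  · have hQ := one_add_sub_mul_laminarSlope_sq_eq_zero_iff (hlt 0 hsurface)
      (2 * g * laminarHeight lam Γ p₀ 0) Q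
    rwa [hΓ0, mul_zero, sub_zero] at hQ
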